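/- arXiv:1706.03722 — 5 statements merged into one kernel-verified Lean document; each statement's English description precedes it below -/
import Mathlib

section
/- Let A and B be types and R : A → B → Prop a binary relation. Suppose there are maps a : 𝒫(ℕ) → A and b : 𝒫(𝒫(ℕ)) → B such that for all J ⊆ ℕ and all I ⊆ 𝒫(ℕ), R (a J) (b I) holds if and only if J ∈ I. Then there is an injective map b' : ℕ → B such that for every subset I ⊆ ℕ there exists x ∈ A with: for all i ∈ ℕ, R x (b' i) holds if and only if i ∈ I. (In particular, the opposite relation of R shatters an infinite subset of B.) -/
theorem ip_of_opp_ip {A B : Type*} (R : A → B → Prop)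
    (a : Set ℕ → A) (b : Set (Set ℕ) → B)
    (h : ∀ (J : Set ℕ) (I : Set (Set ℕ)), R (a J) (b I) ↔ J ∈ I) :
    ∃ b' : ℕ → B, Function.Injective b' ∧
      ∀ I : Set ℕ, ∃ x : A, ∀ i : ℕ, R x (b' i) ↔ i ∈ I := by
  have key : ∀ (I : Set ℕ) (i : ℕ), R (a I) (b {J : Set ℕ | i ∈ J}) ↔ i ∈ I :=
    fun I i => h I {J : Set ℕ | i ∈ J}
  refine ⟨fun i => b {J : Set ℕ | i ∈ J}, ?_, fun I => ⟨a I, key I⟩⟩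
  intro i j hij
  have h1 := (key {i} i).2 rfl
  have hij' : b {J : Set ℕ | i ∈ J} = b {J : Set ℕ | j ∈ J} := hij
  rw [hij'] at h1
  exact ((key {i} j).1 h1).symm
end

section
/- Let A and B be types, R : A → B → Prop a binary relation, and b : ℕ → ℕ → B an array of elements of B such that: (i) for every function σ : ℕ → ℕ there exists x ∈ A with R x (b i (σ i)) for all i ∈ ℕ; and (ii) for every i and all j ≠ k there is no x ∈ A with both R x (b i j) and R x (b i k). Then the map i ↦ b i 0 is injective, and for every subset I ⊆ ℕ there exists x ∈ A such that for all i ∈ ℕ, R x (b i 0) holds if and only if i ∈ I. (In particular, the opposite relation of R shatters the infinite set {b i 0 : i ∈ ℕ}.) -/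
theorem ip_of_tp2 {A B : Type*} (R : A → B → Prop) (b : ℕ → ℕ → B)
    (h1 : ∀ σ : ℕ → ℕ, ∃ x : A, ∀ i : ℕ, R x (b i (σ i)))
    (h2 : ∀ i j k : ℕ, j ≠ k → ¬ ∃ x : A, R x (b i j) ∧ R x (b i k)) :
    Function.Injective (fun i => b i 0) ∧
      ∀ I : Set ℕ, ∃ x : A, ∀ i : ℕ, R x (b i 0) ↔ i ∈ I := by
  classical
  have key : ∀ I : Set ℕ, ∃ x : A, ∀ i : ℕ, R x (b i 0) ↔ i ∈ I := by
    intro I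
    obtain ⟨x, hx⟩ := h1 (fun i => if i ∈ I then 0 else 1)
    refine ⟨x, fun i => ⟨fun h => ?_, fun h => ?_⟩⟩
    · by_contra hi
      have h3 := hx i
      simp only [if_neg hi] at h3
      exact h2 i 0 1 (by decide) ⟨x, h, h3⟩
    · have h3 := hx i
      simpa only [if_pos h] using h3
  refine ⟨?_, key⟩
  intro i j hij
  obtain ⟨x, hx⟩ := key {i}
  have h3 : R x (b i 0) := (hx i).2 rfl
  have hij' : b i 0 = b j 0 := hij
  rw [hij'] at h3
  exact ((hx j).1 h3).symm
end

section
/- Let A and B be types, R : A → B → Prop a binary relation, a : ℕ → A an injective map, and b : 𝒫(ℕ) → B a map such that for every x ∈ A and every I ⊆ ℕ: R x (b I) holds if and only if x = a i for some i ∈ I. Then there exists an array b' : ℕ → ℕ → B such that: (i) for every function σ : ℕ → ℕ and every n ∈ ℕ there exists x ∈ A with R x (b' i (σ i)) for all i < n; and (ii) for every i and all j ≠ k there is no x ∈ A with both R x (b' i j) and R x (b' i k). -/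
theorem tp2_of_only_shatters {A B : Type*} (R : A → B → Prop)
    (a : ℕ → A) (ha : Function.Injective a) (b : Set ℕ → B)
    (h : ∀ (x : A) (I : Set ℕ), R x (b I) ↔ ∃ i ∈ I, x = a i) :
    ∃ b' : ℕ → ℕ → B,
      (∀ σ : ℕ → ℕ, ∀ n : ℕ, ∃ x : A, ∀ i < n, R x (b' i (σ i))) ∧
      (∀ i j k : ℕ, j ≠ k → ¬ ∃ x : A, R x (b' i j) ∧ R x (b' i k)) := by
  refine ⟨fun i j => b {m | ((Encodable.decode (α := List ℕ) m).getD []).getD i 0 = j}, ?_, ?_⟩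
  · intro σ n
    refine ⟨a (Encodable.encode ((List.range n).map σ)), fun i hi => ?_⟩
    rw [h]
    refine ⟨_, ?_, rfl⟩
    simp [hi]
  · rintro i j k hjk ⟨x, h1, h2⟩
    rw [h] at h1 h2
    obtain ⟨m, hm, rfl⟩ := h1
    obtain ⟨m', hm', he⟩ := h2
    obtain rfl := ha he
    exact hjk (hm.symm.trans hm')
end

section
/- Let p : ℕ → ℕ enumerate the prime numbers in increasing order (p 0 = 2, p 1 = 3, ...). Define sets A i j ⊆ ℕ recursively by A 0 j = { (p j)^n : n ≥ 1 } and A (i+1) j = { (p n)^m : n ∈ ℕ, m ∈ A i j }. Then for every function α : ℕ → ℕ and every N ∈ ℕ, the intersection ⋂_{i < N} A i (α i) is nonempty; indeed the iterated power tower p_{α(0)}^{p_{α(1)}^{⋰^{p_{α(N-1)}}}} lies in A i (α i) for every i < N. -/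
/-- The sets `A i j` of iterated prime power towers, relative to an
enumeration `p` of the primes: `A 0 j = {(p j)^n : n ≥ 1}` and
`A (i+1) j = {(p n)^m : n ∈ ℕ, m ∈ A i j}`. -/
def towerSets (p : ℕ → ℕ) : ℕ → ℕ → Set ℕ
  | 0, j => {x | ∃ n : ℕ, 1 ≤ n ∧ x = p j ^ n}
  | i + 1, j => {x | ∃ n m : ℕ, m ∈ towerSets p i j ∧ x = p n ^ m}

/-- The iterated power tower `p (α 0) ^ (p (α 1) ^ (⋯ ^ p (α (N-1))))` of height `N`
(with the convention that the empty tower is `1`). -/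
def primeTower (p : ℕ → ℕ) : (ℕ → ℕ) → ℕ → ℕ
  | _, 0 => 1
  | α, N + 1 => p (α 0) ^ primeTower p (fun i => α (i + 1)) N

theorem primeTower_pos_aux (p : ℕ → ℕ) (hp : ∀ n : ℕ, (p n).Prime) (N : ℕ) :
    ∀ α : ℕ → ℕ, 1 ≤ primeTower p α N := by
  induction N with
  | zero => intro α; simp [primeTower]
  | succ N ih =>
    intro α
    rw [primeTower]
    exact Nat.one_le_pow _ _ (hp _).pos

theorem primeTower_mem_aux (p : ℕ → ℕ) (hp : ∀ n : ℕ, (p n).Prime) (N : ℕ) :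
    ∀ α : ℕ → ℕ, ∀ i < N, primeTower p α N ∈ towerSets p i (α i) := by
  induction N with
  | zero => intro α i hi; omega
  | succ N ih =>
    intro α i hi
    rw [primeTower]
    cases i with
    | zero =>
      rw [towerSets]
      exact ⟨_, primeTower_pos_aux p hp N _, rfl⟩
    | succ i =>
      rw [towerSets]
      exact ⟨_, _, ih (fun i => α (i + 1)) i (by omega), rfl⟩

theorem towerSets_inter_nonempty (p : ℕ → ℕ)
    (hp_mono : StrictMono p) (hp_prime : ∀ n : ℕ, (p n).Prime)
    (hp_surj : ∀ q : ℕ, q.Prime → ∃ n : ℕ, p n = q)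
    (α : ℕ → ℕ) (N : ℕ) :
    (∀ i < N, primeTower p α N ∈ towerSets p i (α i)) ∧
      (⋂ i < N, towerSets p i (α i)).Nonempty := by
  have h := primeTower_mem_aux p hp_prime N α
  exact ⟨h, _, Set.mem_iInter₂.2 h⟩
end

section
/- Let p : ℕ → ℕ enumerate the prime numbers in increasing order (p 0 = 2, p 1 = 3, ...). Define sets A i j ⊆ ℕ recursively by A 0 j = { (p j)^n : n ≥ 1 } and A (i+1) j = { (p n)^m : n ∈ ℕ, m ∈ A i j }. Then for every i ∈ ℕ and all j ≠ k, the sets A i j and A i k are disjoint. -/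
theorem towerSets_pos (p : ℕ → ℕ) (hp_prime : ∀ n : ℕ, (p n).Prime) (i j x : ℕ)
    (hx : x ∈ towerSets p i j) : 0 < x := by
  cases i with
  | zero =>
    obtain ⟨n, -, rfl⟩ := hx
    exact pow_pos (hp_prime j).pos n
  | succ i =>
    obtain ⟨n, m, -, rfl⟩ := hx
    exact pow_pos (hp_prime n).pos m

theorem prime_pow_base_eq {a b n m : ℕ} (ha : a.Prime) (hb : b.Prime) (hn : 0 < n)
    (h : a ^ n = b ^ m) : a = b :=
  (Nat.prime_dvd_prime_iff_eq ha hb).1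
    (ha.dvd_of_dvd_pow (h ▸ dvd_pow_self a hn.ne'))

theorem towerSets_disjoint (p : ℕ → ℕ)
    (hp_mono : StrictMono p) (hp_prime : ∀ n : ℕ, (p n).Prime)
    (hp_surj : ∀ q : ℕ, q.Prime → ∃ n : ℕ, p n = q)
    (i j k : ℕ) (hjk : j ≠ k) :
    Disjoint (towerSets p i j) (towerSets p i k) := by
  induction i with
  | zero =>
    rw [Set.disjoint_left]
    rintro x ⟨n, hn, rfl⟩ ⟨m, hm, h⟩
    exact hjk (hp_mono.injective (prime_pow_base_eq (hp_prime j) (hp_prime k) hn h))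
  | succ i ih =>
    rw [Set.disjoint_left] at ih ⊢
    rintro x ⟨n, m, hm, rfl⟩ ⟨n', m', hm', h⟩
    have hb := prime_pow_base_eq (hp_prime n) (hp_prime n')
      (towerSets_pos p hp_prime i j m hm) h
    rw [← hb] at h
    have hmm := Nat.pow_right_injective (hp_prime n).two_le h
    exact ih hm (hmm ▸ hm')
end
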